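/- arXiv:math/0601254 — 2 statements merged into one kernel-verified Lean document; each statement's English description precedes it below -/
import Mathlib

section
/- Let L be a commutative subspace lattice on H and Φ a rank preserving linear map on Alg L. Let N ∈ L with dim N ≥ 2 and dim N₋^⊥ = 1, let x, y be linearly independent vectors in N, let f be a nonzero vector in N₋^⊥, and suppose u, v, p, q are nonzero vectors in H with Φ(x⊗f*) = u⊗v* and Φ(y⊗f*) = p⊗q*. Then exactly one of the following holds: (1) u ∼ p and v ≁ q; (2) u ≁ p and v ∼ q. -/
open scoped InnerProductSpace

noncomputable section

/-- The join (closed linear span) of a family of subspaces of a Hilbert space. -/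
def closedJoin {H : Type*} [NormedAddCommGroup H] [InnerProductSpace ℂ H]
    (S : Set (Submodule ℂ H)) : Submodule ℂ H :=
  (sSup S).topologicalClosure

/-- A subspace lattice on `H`: a family of closed subspaces containing `{0}` and `H`,
closed under arbitrary intersections and arbitrary closed linear spans. -/
structure IsSubspaceLattice {H : Type*} [NormedAddCommGroup H] [InnerProductSpace ℂ H]
    (L : Set (Submodule ℂ H)) : Prop where
  isClosed : ∀ E ∈ L, IsClosed (E : Set H)
  bot_mem : ⊥ ∈ L
  top_mem : ⊤ ∈ L
  sInf_mem : ∀ S : Set (Submodule ℂ H), S ⊆ L → sInf S ∈ L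
  join_mem : ∀ S : Set (Submodule ℂ H), S ⊆ L → closedJoin S ∈ L

/-- `M₋`: the join of all members of `L` that do not contain `M`. -/
def minus {H : Type*} [NormedAddCommGroup H] [InnerProductSpace ℂ H]
    (L : Set (Submodule ℂ H)) (M : Submodule ℂ H) : Submodule ℂ H :=
  closedJoin {E | E ∈ L ∧ ¬ M ≤ E}

open Classical in
/-- The orthogonal projection of `H` onto a closed subspace `E`, as an operator on `H`
(junk value `0` if `E` is not closed). -/
def projOf {H : Type*} [NormedAddCommGroup H] [InnerProductSpace ℂ H] [CompleteSpace H]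
    (E : Submodule ℂ H) : H →L[ℂ] H :=
  if h : IsClosed (E : Set H) then
    haveI : CompleteSpace E := h.completeSpace_coe
    E.subtypeL.comp (Submodule.orthogonalProjectionOnto E)
  else 0

/-- A commutative subspace lattice: the orthogonal projections onto members commute. -/
structure IsCSL {H : Type*} [NormedAddCommGroup H] [InnerProductSpace ℂ H] [CompleteSpace H]
    (L : Set (Submodule ℂ H)) extends IsSubspaceLattice L : Prop where
  commutes : ∀ E ∈ L, ∀ F ∈ L, projOf E * projOf F = projOf F * projOf E

/-- Complete distributivity of the lattice `L` (meets are intersections, joins are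
closed linear spans). -/
def IsCompletelyDistributive {H : Type*} [NormedAddCommGroup H] [InnerProductSpace ℂ H]
    (L : Set (Submodule ℂ H)) : Prop :=
  ∀ (I : Type) (J : I → Type) (E : (i : I) → J i → Submodule ℂ H),
    (∀ i j, E i j ∈ L) →
     ((⨅ i, closedJoin (Set.range (E i)))
        = closedJoin (Set.range fun φ : (∀ i, J i) => ⨅ i, E i (φ i)))
    ∧ (closedJoin (Set.range fun i => ⨅ j, E i j)
        = ⨅ φ : (∀ i, J i), closedJoin (Set.range fun i => E i (φ i)))

/-- `Alg L`: all bounded operators leaving every member of `L` invariant. -/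
def algL {H : Type*} [NormedAddCommGroup H] [InnerProductSpace ℂ H]
    (L : Set (Submodule ℂ H)) : Set (H →L[ℂ] H) :=
  {T | ∀ E ∈ L, ∀ x ∈ E, T x ∈ E}

/-- The rank one operator `x ⊗ f* : h ↦ ⟨h, f⟩ x`. -/
def rankOne {H : Type*} [NormedAddCommGroup H] [InnerProductSpace ℂ H]
    (x f : H) : H →L[ℂ] H :=
  (innerSL ℂ f).smulRight x

/-- The rank of a bounded operator: the dimension of its range. -/
def opRank {H : Type*} [NormedAddCommGroup H] [InnerProductSpace ℂ H]
    (T : H →L[ℂ] H) : Cardinal :=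
  Module.rank ℂ (LinearMap.range (T : H →ₗ[ℂ] H))

/-- `Φ` is a linear map of `Alg L` into itself. -/
structure IsLinearOnAlg {H : Type*} [NormedAddCommGroup H] [InnerProductSpace ℂ H]
    (L : Set (Submodule ℂ H)) (Φ : (H →L[ℂ] H) → (H →L[ℂ] H)) : Prop where
  maps : ∀ A ∈ algL L, Φ A ∈ algL L
  map_add : ∀ A ∈ algL L, ∀ B ∈ algL L, Φ (A + B) = Φ A + Φ B
  map_smul : ∀ (c : ℂ), ∀ A ∈ algL L, Φ (c • A) = c • Φ A

/-- `Φ` preserves the rank of every finite rank operator in `Alg L`. -/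
def RankPreserving {H : Type*} [NormedAddCommGroup H] [InnerProductSpace ℂ H]
    (L : Set (Submodule ℂ H)) (Φ : (H →L[ℂ] H) → (H →L[ℂ] H)) : Prop :=
  ∀ A ∈ algL L, opRank A < Cardinal.aleph0 → opRank (Φ A) = opRank A

/-- `a ∼ b`: (nonzero) vectors `a` and `b` are linearly dependent. -/
def Dep {H : Type*} [NormedAddCommGroup H] [InnerProductSpace ℂ H] (a b : H) : Prop :=
  ∃ c : ℂ, c ≠ 0 ∧ b = c • a

/-- `N` is consistent with respect to `Φ`. -/
def Consistent {H : Type*} [NormedAddCommGroup H] [InnerProductSpace ℂ H]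
    (L : Set (Submodule ℂ H)) (Φ : (H →L[ℂ] H) → (H →L[ℂ] H))
    (N : Submodule ℂ H) : Prop :=
  N ≠ ⊥ ∧ minus L N ≠ ⊤ ∧
    ∃ (U : N →ₗ[ℂ] H) (V : ((minus L N)ᗮ : Submodule ℂ H) →ₗ[ℂ] H),
      ∀ (x : N) (f : ((minus L N)ᗮ : Submodule ℂ H)),
        Φ (rankOne (x : H) (f : H)) = rankOne (U x) (V f)

/-- `N` is twisted with respect to `Φ`. -/
def Twisted {H : Type*} [NormedAddCommGroup H] [InnerProductSpace ℂ H]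
    (L : Set (Submodule ℂ H)) (Φ : (H →L[ℂ] H) → (H →L[ℂ] H))
    (N : Submodule ℂ H) : Prop :=
  N ≠ ⊥ ∧ minus L N ≠ ⊤ ∧
    ∃ (U : ((minus L N)ᗮ : Submodule ℂ H) →ₗ⋆[ℂ] H) (V : N →ₗ⋆[ℂ] H),
      ∀ (x : N) (f : ((minus L N)ᗮ : Submodule ℂ H)),
        Φ (rankOne (x : H) (f : H)) = rankOne (U f) (V x)

/-- `N` is isolated: `dim N = 1` and `N^⊥ ∈ L`. -/
def Isolated {H : Type*} [NormedAddCommGroup H] [InnerProductSpace ℂ H]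
    (L : Set (Submodule ℂ H)) (N : Submodule ℂ H) : Prop :=
  Module.rank ℂ N = 1 ∧ Nᗮ ∈ L

/-- The family `F` of all `N ∈ L` with `N ≠ {0}` and `N₋ ≠ H`. -/
def famF {H : Type*} [NormedAddCommGroup H] [InnerProductSpace ℂ H]
    (L : Set (Submodule ℂ H)) : Set (Submodule ℂ H) :=
  {N | N ∈ L ∧ N ≠ ⊥ ∧ minus L N ≠ ⊤}

/-- Subspaces are comparable if one contains the other. -/
def Comparable' {H : Type*} [NormedAddCommGroup H] [InnerProductSpace ℂ H]
    (M N : Submodule ℂ H) : Prop :=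
  M ≤ N ∨ N ≤ M

/-- There is a chain in `F` from `M` to `N`. -/
def ChainConn {H : Type*} [NormedAddCommGroup H] [InnerProductSpace ℂ H]
    (L : Set (Submodule ℂ H)) (M N : Submodule ℂ H) : Prop :=
  ∃ (n : ℕ) (c : Fin (n + 1) → Submodule ℂ H),
    (∀ k, c k ∈ famF L) ∧ c 0 = M ∧ c (Fin.last n) = N ∧
      ∀ k : Fin n, Comparable' (c k.castSucc) (c k.succ)

/-- `𝔊_N`: all members of `F` that can be connected to `N` by a chain. -/
def GSet {H : Type*} [NormedAddCommGroup H] [InnerProductSpace ℂ H]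
    (L : Set (Submodule ℂ H)) (N : Submodule ℂ H) : Set (Submodule ℂ H) :=
  {M | M ∈ famF L ∧ ChainConn L N M}

end


section Helpers
variable {H : Type*} [NormedAddCommGroup H] [InnerProductSpace ℂ H]

lemma aux_apply (x f h : H) : rankOne x f h = (inner ℂ f h : ℂ) • x := by
  simp [rankOne]

lemma aux_rank_one {x f : H} (hx : x ≠ 0) (hf : f ≠ 0) : opRank (rankOne x f) = 1 := by
  have hr : LinearMap.range (rankOne x f : H →ₗ[ℂ] H) = Submodule.span ℂ {x} := by
    ext z
    rw [Submodule.mem_span_singleton, LinearMap.mem_range]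
    constructor
    · rintro ⟨h, rfl⟩
      exact ⟨inner ℂ f h, (aux_apply x f h).symm⟩
    · rintro ⟨a, rfl⟩
      refine ⟨(a / inner ℂ f f) • f, ?_⟩
      have hff : (inner ℂ f f : ℂ) ≠ 0 := inner_self_ne_zero.mpr hf
      change rankOne x f _ = _
      rw [aux_apply, inner_smul_right, div_mul_cancel₀ _ hff]
  rw [opRank, hr]
  exact Module.rank_eq_one_iff_finrank_eq_one.mpr (finrank_span_singleton hx)

lemma aux_mem (L : Set (Submodule ℂ H)) (N : Submodule ℂ H) {x f : H} (hx : x ∈ N)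
    (hf : f ∈ (minus L N)ᗮ) : rankOne x f ∈ algL L := by
  intro E hE z hz
  rw [aux_apply]
  by_cases h : N ≤ E
  · exact E.smul_mem _ (h hx)
  · have hz' : z ∈ minus L N :=
      (sSup {E | E ∈ L ∧ ¬ N ≤ E}).le_topologicalClosure
        ((le_sSup (show E ∈ {E | E ∈ L ∧ ¬ N ≤ E} from ⟨hE, h⟩)) hz)
    rw [Submodule.inner_left_of_mem_orthogonal hz' hf, zero_smul]
    exact E.zero_mem

/-- If `v`, `q` are not dependent, some vector is orthogonal to `v` but not to `q`. -/
lemma aux_sep {v q : H} (hv : v ≠ 0) (hq : q ≠ 0) (h : ¬ Dep v q) :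
    ∃ z : H, inner ℂ v z = (0 : ℂ) ∧ inner ℂ q z ≠ (0 : ℂ) := by
  by_contra! hc
  have hvv : (inner ℂ v v : ℂ) ≠ 0 := inner_self_ne_zero.mpr hv
  set a : ℂ := inner ℂ v q / inner ℂ v v with ha
  have h1 : inner ℂ v (q - a • v) = (0 : ℂ) := by
    rw [inner_sub_right, inner_smul_right, ha, div_mul_cancel₀ _ hvv, sub_self]
  have h2 := hc _ h1
  have h3 : inner ℂ (q - a • v) (q - a • v) = (0 : ℂ) := by
    rw [inner_sub_left, inner_smul_left, h1, h2]; simp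
  have h4 : q = a • v := sub_eq_zero.mp (inner_self_eq_zero.mp h3)
  refine h ⟨a, ?_, h4⟩
  rintro h0
  rw [h0, zero_smul] at h4
  exact hq h4

lemma aux_dep_symm {a b : H} (h : Dep a b) : Dep b a := by
  obtain ⟨c, hc, rfl⟩ := h
  exact ⟨c⁻¹, inv_ne_zero hc, by rw [smul_smul, inv_mul_cancel₀ hc, one_smul]⟩

lemma aux_both {u v p q : H} (hu : u ≠ 0) (hv : v ≠ 0) (hp : p ≠ 0) (hq : q ≠ 0)
    (hup : ¬ Dep u p) (hvq : ¬ Dep v q) : opRank (rankOne u v + rankOne p q) ≠ 1 := by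
  intro hT
  obtain ⟨z, hz1, hz2⟩ := aux_sep hv hq hvq
  obtain ⟨w, hw1, hw2⟩ := aux_sep hq hv (fun h => hvq (aux_dep_symm h))
  set T := rankOne u v + rankOne p q with hTd
  have hfr : Module.rank ℂ (LinearMap.range (T : H →ₗ[ℂ] H)) ≤ 1 := le_of_eq hT
  obtain ⟨e, he⟩ := (rank_submodule_le_one_iff' _).mp hfr
  have hpm : p ∈ Submodule.span ℂ {e} := by
    have h1 : T z = (inner ℂ q z : ℂ) • p := by
      rw [hTd, ContinuousLinearMap.add_apply, aux_apply, aux_apply, hz1]; simp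
    have h2 := he (LinearMap.mem_range_self (T : H →ₗ[ℂ] H) z)
    change T z ∈ _ at h2
    rw [h1] at h2
    exact (Submodule.smul_mem_iff _ hz2).mp h2
  have hum : u ∈ Submodule.span ℂ {e} := by
    have h1 : T w = (inner ℂ v w : ℂ) • u := by
      rw [hTd, ContinuousLinearMap.add_apply, aux_apply, aux_apply, hw1]; simp
    have h2 := he (LinearMap.mem_range_self (T : H →ₗ[ℂ] H) w)
    change T w ∈ _ at h2
    rw [h1] at h2
    exact (Submodule.smul_mem_iff _ hw2).mp h2
  obtain ⟨a, rfl⟩ := Submodule.mem_span_singleton.mp hpm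
  obtain ⟨b, rfl⟩ := Submodule.mem_span_singleton.mp hum
  have ha : a ≠ 0 := fun h => hp (by rw [h, zero_smul])
  have hb : b ≠ 0 := fun h => hu (by rw [h, zero_smul])
  exact hup ⟨a / b, div_ne_zero ha hb, by rw [smul_smul, div_mul_cancel₀ _ hb]⟩

end Helpers

theorem stmt_4 {H : Type*} [NormedAddCommGroup H] [InnerProductSpace ℂ H]
    [CompleteSpace H] [TopologicalSpace.SeparableSpace H]
    (L : Set (Submodule ℂ H)) (hL : IsCSL L)
    (Φ : (H →L[ℂ] H) → (H →L[ℂ] H)) (hlin : IsLinearOnAlg L Φ)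
    (hrank : RankPreserving L Φ)
    (N : Submodule ℂ H) (hN : N ∈ L)
    (hdimN : 2 ≤ Module.rank ℂ N)
    (hdimN' : Module.rank ℂ (((minus L N)ᗮ : Submodule ℂ H) : Type _) = 1)
    (x y f u v p q : H)
    (hx : x ∈ N) (hy : y ∈ N) (hxy : LinearIndependent ℂ ![x, y])
    (hf : f ∈ (minus L N)ᗮ) (hf0 : f ≠ 0)
    (hu : u ≠ 0) (hv : v ≠ 0) (hp : p ≠ 0) (hq : q ≠ 0)
    (hG : Φ (rankOne x f) = rankOne u v)
    (hH : Φ (rankOne y f) = rankOne p q) :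
    Xor' (Dep u p ∧ ¬ Dep v q) (¬ Dep u p ∧ Dep v q) := by
  have hA := aux_mem L N hx hf
  have hB := aux_mem L N hy hf
  have key : ∀ k : ℂ, opRank (rankOne p q + k • rankOne u v) = 1 := by
    intro k
    have hC := aux_mem L N (N.add_mem hy (N.smul_mem k hx)) hf
    have hkA := aux_mem L N (N.smul_mem k hx) hf
    have hne : y + k • x ≠ 0 := by
      intro h0
      have := LinearIndependent.pair_iff.mp hxy k 1 (by rw [one_smul, add_comm]; exact h0)
      exact one_ne_zero this.2
    have e1 : rankOne (k • x) f = k • rankOne x f := by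
      ext z; simp [aux_apply, smul_smul, mul_comm]
    have e2 : rankOne (y + k • x) f = rankOne y f + k • rankOne x f := by
      ext z; simp [aux_apply, smul_smul, mul_comm]
    have h1 := aux_rank_one hne hf0
    have h2 := hrank _ hC (by rw [h1]; exact Cardinal.one_lt_aleph0)
    rw [h1, e2, hlin.map_add _ hB _ (e1 ▸ hkA), hlin.map_smul _ _ hA, hG, hH] at h2
    exact h2
  have not_both : ¬ (Dep u p ∧ Dep v q) := by
    rintro ⟨⟨c, hc, rfl⟩, ⟨d, hd, rfl⟩⟩
    have h := key (-(c * (starRingEnd ℂ) d))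
    have hz : rankOne (c • u) (d • v) + (-(c * (starRingEnd ℂ) d)) • rankOne u v = 0 := by
      ext z
      simp only [ContinuousLinearMap.add_apply, ContinuousLinearMap.smul_apply, aux_apply,
        inner_smul_left, smul_smul, ← add_smul, ContinuousLinearMap.zero_apply]
      convert zero_smul ℂ u using 2
      ring
    rw [hz] at h
    simp [opRank] at h
  have not_neither : ¬ (¬ Dep u p ∧ ¬ Dep v q) := by
    rintro ⟨h1, h2⟩
    have h := key 1
    rw [one_smul, add_comm] at h
    exact aux_both hu hv hp hq h1 h2 h
  unfold Xor'
  tauto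
end

section
/- Let L be a commutative subspace lattice on H, let Φ be a rank preserving linear map on Alg L, and let M, N be nonzero, non-isolated elements of L with M₋ ≠ H and N₋ ≠ H. If M is consistent with respect to Φ and N is twisted with respect to Φ, then M ∩ N = {0} and M₋^⊥ ∩ N₋^⊥ = {0}. -/
open scoped InnerProductSpace

/-- Linear dependence of a pair of vectors. -/
def PD {H : Type*} [NormedAddCommGroup H] [InnerProductSpace ℂ H] (u v : H) : Prop :=
  ∃ s t : ℂ, (s ≠ 0 ∨ t ≠ 0) ∧ s • u + t • v = 0

section helpers
variable {H : Type*} [NormedAddCommGroup H] [InnerProductSpace ℂ H]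

lemma PD.symm {u v : H} (h : PD u v) : PD v u := by
  obtain ⟨s, t, h1, h2⟩ := h
  exact ⟨t, s, h1.symm, by rw [add_comm]; exact h2⟩

lemma PD.refl (u : H) : PD u u := ⟨1, -1, Or.inl one_ne_zero, by simp⟩

/-- If `u ≠ 0` and `u, v` dependent, `v` is a multiple of `u`. -/
lemma PD.exists_smul {u v : H} (h : PD u v) (hu : u ≠ 0) : ∃ c : ℂ, v = c • u := by
  obtain ⟨s, t, h1, h2⟩ := h
  have ht : t ≠ 0 := by
    rintro rfl
    simp at h1 h2
    tauto
  refine ⟨-(t⁻¹ * s), ?_⟩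
  have : t • v = -(s • u) := by
    rw [eq_neg_iff_add_eq_zero, add_comm]; exact h2
  calc v = t⁻¹ • (t • v) := by rw [smul_smul, inv_mul_cancel₀ ht, one_smul]
    _ = _ := by rw [this, smul_neg, smul_smul, neg_smul]

lemma PD.of_smul (w : H) (a b : ℂ) : PD (a • w) (b • w) := by
  by_cases ha : a = 0
  · subst ha
    exact ⟨1, 0, Or.inl one_ne_zero, by simp⟩
  · refine ⟨b, -a, Or.inr (neg_ne_zero.mpr ha), ?_⟩
    rw [smul_smul, smul_smul, neg_mul, neg_smul, mul_comm a b, add_neg_cancel]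

lemma PD.trans {u v w : H} (h : PD u v) (hv : v ≠ 0) (h' : PD v w) : PD u w := by
  obtain ⟨a, rfl⟩ := h.symm.exists_smul hv
  obtain ⟨b, rfl⟩ := h'.exists_smul hv
  exact PD.of_smul v a b

lemma rankOne_apply' (x f h : H) : rankOne x f h = ⟪f, h⟫_ℂ • x := by
  simp [rankOne]

lemma opRank_rankOne_le (x f : H) : opRank (rankOne x f) ≤ 1 := by
  unfold opRank
  have : LinearMap.range (rankOne x f : H →ₗ[ℂ] H) ≤ Submodule.span ℂ {x} := by
    rintro _ ⟨h, rfl⟩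
    exact Submodule.mem_span_singleton.mpr ⟨⟪f, h⟫_ℂ, (rankOne_apply' x f h).symm⟩
  refine (Submodule.rank_mono this).trans ?_
  refine (rank_span_le _).trans ?_
  simp

lemma opRank_sum_lt (x f y g : H) : opRank (rankOne x f + rankOne y g) < Cardinal.aleph0 := by
  unfold opRank
  have : LinearMap.range ((rankOne x f + rankOne y g : H →L[ℂ] H) : H →ₗ[ℂ] H)
      ≤ Submodule.span ℂ {x, y} := by
    rintro _ ⟨h, rfl⟩
    refine Submodule.mem_span_pair.mpr ⟨⟪f, h⟫_ℂ, ⟪g, h⟫_ℂ, ?_⟩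
    simp [rankOne_apply']
  refine (Submodule.rank_mono this).trans_lt ?_
  refine (rank_span_le _).trans_lt ?_
  exact Cardinal.lt_aleph0_iff_set_finite.mpr (by simp)

lemma gram_dep (f g : H) (h : ∀ k : H, ⟪g, k⟫_ℂ = 0 → ⟪f, k⟫_ℂ = 0) : PD f g := by
  by_cases hg : g = 0
  · exact ⟨0, 1, Or.inr one_ne_zero, by simp [hg]⟩
  have hgg : ⟪g, g⟫_ℂ ≠ 0 := inner_self_ne_zero.mpr hg
  set k := ⟪g, g⟫_ℂ • f - ⟪g, f⟫_ℂ • g with hk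
  have h1 : ⟪g, k⟫_ℂ = 0 := by
    rw [hk, inner_sub_right, inner_smul_right, inner_smul_right]; ring
  have h2 := h k h1
  have h3 : ⟪k, k⟫_ℂ = 0 := by
    have h5 : ⟪⟪g, g⟫_ℂ • f - ⟪g, f⟫_ℂ • g, k⟫_ℂ = 0 := by
      rw [inner_sub_left, inner_smul_left, inner_smul_left, h1, h2]; simp
    exact h5
  have h4 : k = 0 := inner_self_eq_zero.mp h3
  refine ⟨⟪g, g⟫_ℂ, -⟪g, f⟫_ℂ, Or.inl hgg, ?_⟩
  rw [neg_smul, ← sub_eq_add_neg]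
  exact h4

lemma opRank_sum_le_one_iff (x f y g : H) :
    opRank (rankOne x f + rankOne y g) ≤ 1 ↔ PD x y ∨ PD f g := by
  constructor
  · intro h
    by_contra hcon
    push Not at hcon
    obtain ⟨hxy, hfg⟩ := hcon
    obtain ⟨w, -, hw⟩ := rank_submodule_le_one_iff _ |>.mp h
    have key : ∀ k : H, ⟪f, k⟫_ℂ • x + ⟪g, k⟫_ℂ • y ∈ Submodule.span ℂ {w} := by
      intro k
      apply hw
      exact ⟨k, by simp [rankOne_apply']⟩
    have hx : x ∈ Submodule.span ℂ {w} := by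
      by_contra hx
      refine hfg (gram_dep f g fun k hk => ?_)
      by_contra hfk
      have := key k
      rw [hk, zero_smul, add_zero] at this
      exact hx ((Submodule.smul_mem_iff _ hfk).mp this)
    have hy : y ∈ Submodule.span ℂ {w} := by
      by_contra hy
      refine hfg (gram_dep g f fun k hk => ?_).symm
      by_contra hfk
      have := key k
      rw [hk, zero_smul, zero_add] at this
      exact hy ((Submodule.smul_mem_iff _ hfk).mp this)
    obtain ⟨a, rfl⟩ := Submodule.mem_span_singleton.mp hx
    obtain ⟨b, rfl⟩ := Submodule.mem_span_singleton.mp hy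
    exact hxy (PD.of_smul w a b)
  · intro h
    have : ∃ w k : H, rankOne x f + rankOne y g = rankOne w k := by
      rcases h with h | h
      · by_cases hx : x = 0
        · refine ⟨y, g, ?_⟩
          ext k; simp [rankOne_apply', hx]
        · obtain ⟨c, rfl⟩ := h.exists_smul hx
          refine ⟨x, f + (starRingEnd ℂ c) • g, ?_⟩
          ext k
          simp only [rankOne_apply', ContinuousLinearMap.add_apply, inner_add_left,
            inner_smul_left, add_smul, smul_smul, Complex.conj_conj]
          rw [mul_comm]
      · by_cases hf : f = 0
        · refine ⟨y, g, ?_⟩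
          ext k; simp [rankOne_apply', hf]
        · obtain ⟨c, rfl⟩ := h.exists_smul hf
          refine ⟨x + (starRingEnd ℂ c) • y, f, ?_⟩
          ext k
          simp only [rankOne_apply', ContinuousLinearMap.add_apply, 
            inner_smul_left, smul_add, smul_smul]
          rw [mul_comm]
    obtain ⟨w, k, hwk⟩ := this
    rw [hwk]
    exact opRank_rankOne_le w k

lemma opRank_eq_zero (T : H →L[ℂ] H) (h : opRank T = 0) : T = 0 := by
  unfold opRank at h
  have h1 := Submodule.rank_eq_zero.mp h
  have h2 := LinearMap.range_eq_bot.mp h1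
  ext x
  exact LinearMap.congr_fun h2 x

lemma rankOne_mem_algL (L : Set (Submodule ℂ H)) (E : Submodule ℂ H) {x f : H} (hx : x ∈ E)
    (hf : f ∈ (minus L E)ᗮ) : rankOne x f ∈ algL L := by
  intro G hG h hh
  rw [rankOne_apply']
  by_cases hEG : E ≤ G
  · exact G.smul_mem _ (hEG hx)
  · have : h ∈ minus L E :=
      Submodule.le_topologicalClosure _ ((le_sSup (show G ∈ {E' | E' ∈ L ∧ ¬ E ≤ E'} from
        ⟨hG, hEG⟩)) hh)
    rw [Submodule.inner_left_of_mem_orthogonal this hf, zero_smul]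
    exact G.zero_mem

lemma add_mem_algL (L : Set (Submodule ℂ H)) {A B : H →L[ℂ] H} (hA : A ∈ algL L)
    (hB : B ∈ algL L) : A + B ∈ algL L :=
  fun E hE x hx => E.add_mem (hA E hE x hx) (hB E hE x hx)

lemma PD.of_map {σ : ℂ →+* ℂ} {σ' : ℂ →+* ℂ} (hσ : ∀ c, σ (σ' c) = c) {M : Submodule ℂ H}
    (U : M →ₛₗ[σ] H) (hU : ∀ x, x ≠ 0 → U x ≠ 0) (x y : M) (h : PD (U x) (U y)) :
    PD (x : H) (y : H) := by
  obtain ⟨s, t, h1, h2⟩ := h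
  have hz : ∀ c, c ≠ 0 → σ' c ≠ 0 := by
    intro c hc h0
    apply hc
    rw [← hσ c, h0, map_zero]
  refine ⟨σ' s, σ' t, h1.imp (hz s) (hz t), ?_⟩
  have : U (σ' s • x + σ' t • y) = 0 := by
    rw [map_add, map_smulₛₗ, map_smulₛₗ, hσ, hσ]; exact h2
  have h3 : σ' s • x + σ' t • y = 0 := by
    by_contra hne
    exact hU _ hne this
  simpa using congrArg (Subtype.val) h3

/-- The data extracted from one consistent and one twisted subspace. -/
structure Pairing (M F N G : Submodule ℂ H) (U : M → H) (V : F → H) (U' : G → H)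
    (V' : N → H) : Prop where
  neM : M ≠ ⊥
  neF : F ≠ ⊥
  neN : N ≠ ⊥
  neG : G ≠ ⊥
  hU : ∀ x y, PD (U x) (U y) → PD (x : H) y
  hV : ∀ x y, PD (V x) (V y) → PD (x : H) y
  hU' : ∀ x y, PD (U' x) (U' y) → PD (x : H) y
  hV' : ∀ x y, PD (V' x) (V' y) → PD (x : H) y
  nU : ∀ x, x ≠ 0 → U x ≠ 0
  nV : ∀ x, x ≠ 0 → V x ≠ 0
  nU' : ∀ x, x ≠ 0 → U' x ≠ 0
  nV' : ∀ x, x ≠ 0 → V' x ≠ 0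
  cross : ∀ (x : M) (f : F) (y : N) (g : G), (PD (x : H) (y : H) ∨ PD (f : H) (g : H)) ↔
    (PD (U x) (U' g) ∨ PD (V f) (V' y))
  isoM : (∀ x y : M, PD (x : H) y) → (∀ x y : F, PD (x : H) y) → False
  isoN : (∀ x y : N, PD (x : H) y) → (∀ x y : G, PD (x : H) y) → False

lemma Pairing.swap {M F N G : Submodule ℂ H} {U : M → H} {V : F → H} {U' : G → H}
    {V' : N → H} (h : Pairing M F N G U V U' V') : Pairing N G M F V' U' V U where
  neM := h.neN
  neF := h.neG
  neN := h.neM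
  neG := h.neF
  hU := h.hV'
  hV := h.hU'
  hU' := h.hV
  hV' := h.hU
  nU := h.nV'
  nV := h.nU'
  nU' := h.nV
  nV' := h.nU
  cross := fun x f y g => by
    have := h.cross y g x f
    constructor
    · intro h1
      exact (this.mp (h1.imp PD.symm PD.symm)).symm.imp PD.symm PD.symm
    · intro h1
      exact (this.mpr (h1.symm.imp PD.symm PD.symm)).imp PD.symm PD.symm
  isoM := h.isoN
  isoN := h.isoM

lemma exists_ne_zero' {M : Submodule ℂ H} (h : M ≠ ⊥) : ∃ x : M, x ≠ 0 := by
  obtain ⟨x, hx, h0⟩ := Submodule.exists_mem_ne_zero_of_ne_bot h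
  exact ⟨⟨x, hx⟩, fun h => h0 (congrArg Subtype.val h)⟩

lemma Pairing.caseA {M F N G : Submodule ℂ H} {U : M → H} {V : F → H} {U' : G → H}
    {V' : N → H} (h : Pairing M F N G U V U' V') (x : H) (hx : x ≠ 0) (hxM : x ∈ M)
    (hxN : x ∈ N) (hA : ∀ g, PD (U ⟨x, hxM⟩) (U' g)) : False := by
  have hx' : (⟨x, hxM⟩ : M) ≠ 0 := fun h => hx (congrArg Subtype.val h)
  have hG : ∀ g g' : G, PD (g : H) g' := fun g g' =>
    h.hU' _ _ ((hA g).symm.trans (h.nU _ hx') (hA g'))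
  obtain ⟨f0, hf0⟩ := exists_ne_zero' h.neF
  obtain ⟨g0, hg0⟩ := exists_ne_zero' h.neG
  have hg0' : (g0 : H) ≠ 0 := by simpa using hg0
  have hd : ∀ (f : F) (y : N) (g : G), PD x (y : H) ∨ PD (f : H) g := fun f y g =>
    (h.cross ⟨x, hxM⟩ f y g).mpr (Or.inl (hA g))
  by_cases hy : ∀ y : N, PD x (y : H)
  · exact h.isoN (fun y y' => (hy y).symm.trans hx (hy y')) hG
  push Not at hy
  obtain ⟨y0, hy0⟩ := hy
  have hFG : ∀ (f : F) (g : G), PD (f : H) g := fun f g => (hd f y0 g).resolve_left hy0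
  by_cases hz : ∀ z : M, PD x (z : H)
  · exact h.isoM (fun y y' => (hz y).symm.trans hx (hz y'))
      (fun f f' => (hFG f g0).trans hg0' (hFG f' g0).symm)
  push Not at hz
  obtain ⟨z0, hz0⟩ := hz
  have hn : ¬ PD (U z0) (U' g0) := fun h1 =>
    hz0 (h.hU ⟨x, hxM⟩ z0 ((hA g0).trans (h.nU' _ hg0) h1.symm))
  have h1 := ((h.cross z0 f0 y0 g0).mp (Or.inr (hFG f0 g0))).resolve_left hn
  have h2 := ((h.cross z0 f0 ⟨x, hxN⟩ g0).mp (Or.inr (hFG f0 g0))).resolve_left hn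
  exact hy0 (h.hV' ⟨x, hxN⟩ y0 (h2.symm.trans (h.nV _ hf0) h1))

lemma Pairing.part1 {M F N G : Submodule ℂ H} {U : M → H} {V : F → H} {U' : G → H}
    {V' : N → H} (h : Pairing M F N G U V U' V') (x : H) (hx : x ≠ 0) (hxM : x ∈ M)
    (hxN : x ∈ N) : False := by
  have hc : ∀ f g, PD (U ⟨x, hxM⟩) (U' g) ∨ PD (V f) (V' ⟨x, hxN⟩) := fun f g =>
    (h.cross ⟨x, hxM⟩ f ⟨x, hxN⟩ g).mp (Or.inl (PD.refl x))
  by_cases hA : ∀ g, PD (U ⟨x, hxM⟩) (U' g)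
  · exact h.caseA x hx hxM hxN hA
  · push Not at hA
    obtain ⟨g, hg⟩ := hA
    exact h.swap.caseA x hx hxN hxM (fun f => ((hc f g).resolve_left hg).symm)

lemma Pairing.caseA2 {M F N G : Submodule ℂ H} {U : M → H} {V : F → H} {U' : G → H}
    {V' : N → H} (h : Pairing M F N G U V U' V') (g : H) (hg : g ≠ 0)
    (hgG : g ∈ G) (hA : ∀ z, PD (U z) (U' ⟨g, hgG⟩)) : False := by
  have hg' : (⟨g, hgG⟩ : G) ≠ 0 := fun h => hg (congrArg Subtype.val h)
  have hM : ∀ z z' : M, PD (z : H) z' := fun z z' =>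
    h.hU _ _ ((hA z).trans (h.nU' _ hg') (hA z').symm)
  have hf : ∃ f : F, ¬ PD (f : H) g := by
    by_contra hcon
    push Not at hcon
    exact h.isoM hM (fun f f' => (hcon f).trans hg (hcon f').symm)
  obtain ⟨f, hf⟩ := hf
  obtain ⟨x0, hx0⟩ := exists_ne_zero' h.neM
  obtain ⟨y0, hy0⟩ := exists_ne_zero' h.neN
  have hd : PD (x0 : H) y0 :=
    ((h.cross x0 f y0 ⟨g, hgG⟩).mpr (Or.inl (hA x0))).resolve_right hf
  obtain ⟨c, hc⟩ := hd.exists_smul (by simpa using hx0)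
  exact h.part1 y0 (by simpa using hy0) (hc ▸ M.smul_mem c x0.2) y0.2

lemma Pairing.part2 {M F N G : Submodule ℂ H} {U : M → H} {V : F → H} {U' : G → H}
    {V' : N → H} (h : Pairing M F N G U V U' V') (g : H) (hg : g ≠ 0) (hgF : g ∈ F)
    (hgG : g ∈ G) : False := by
  have hc : ∀ z y, PD (U z) (U' ⟨g, hgG⟩) ∨ PD (V ⟨g, hgF⟩) (V' y) := fun z y =>
    (h.cross z ⟨g, hgF⟩ y ⟨g, hgG⟩).mp (Or.inr (PD.refl g))
  by_cases hA : ∀ z, PD (U z) (U' ⟨g, hgG⟩)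
  · exact h.caseA2 g hg hgG hA
  · push Not at hA
    obtain ⟨z, hz⟩ := hA
    exact h.swap.caseA2 g hg hgF (fun y => ((hc z y).resolve_left hz).symm)

lemma eq_span_of_PD {M : Submodule ℂ H} (h : ∀ x y : M, PD (x : H) y) {x : H} (hx : x ∈ M)
    (hx0 : x ≠ 0) : M = Submodule.span ℂ {x} := by
  apply le_antisymm
  · intro y hy
    obtain ⟨c, hc⟩ := (h ⟨x, hx⟩ ⟨y, hy⟩).exists_smul hx0
    exact Submodule.mem_span_singleton.mpr ⟨c, hc.symm⟩
  · simpa using hx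

variable [CompleteSpace H]

lemma projOf_eq {E : Submodule ℂ H} (h : IsClosed (E : Set H)) :
    (∀ x, projOf E x ∈ E) ∧ (∀ x ∈ E, projOf E x = x) ∧ ∀ x, projOf E x = 0 → x ∈ Eᗮ := by
  haveI : CompleteSpace E := h.completeSpace_coe
  have h1 : ∀ x, projOf E x = (Submodule.orthogonalProjectionOnto E x : H) := by
    intro x
    unfold projOf
    rw [dif_pos h]
    rfl
  refine ⟨fun x => ?_, fun x hx => ?_, fun x hx => ?_⟩
  · rw [h1]; exact Subtype.property _
  · rw [h1]
    exact Submodule.starProjection_eq_self_iff.mpr hx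
  · rw [h1] at hx
    have : Submodule.orthogonalProjectionOnto E x = 0 := by
      exact Subtype.ext hx
    exact Submodule.orthogonalProjectionOnto_eq_zero_iff.mp this

lemma isolated_of (L : Set (Submodule ℂ H)) (hL : IsCSL L) (M : Submodule ℂ H) (hM : M ∈ L)
    (hM0 : M ≠ ⊥) (h1 : ∀ x y : M, PD (x : H) y)
    (h2 : ∀ x y : ((minus L M)ᗮ : Submodule ℂ H), PD (x : H) y) : Isolated L M := by
  obtain ⟨⟨x, hxM⟩, hx0'⟩ := exists_ne_zero' hM0
  have hx0 : x ≠ 0 := fun h => hx0' (Subtype.ext h)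
  have hs := eq_span_of_PD h1 hxM hx0
  have hxF : x ∈ (minus L M)ᗮ := by
    unfold minus closedJoin
    rw [Submodule.orthogonal_closure]
    have : sSup {E | E ∈ L ∧ ¬ M ≤ E} ≤ (Submodule.span ℂ {x})ᗮ := by
      apply sSup_le
      rintro E ⟨hE, hME⟩
      obtain ⟨e1, e2, e3⟩ := projOf_eq (hL.isClosed E hE)
      obtain ⟨m1, m2, m3⟩ := projOf_eq (hL.isClosed M hM)
      have hc := DFunLike.congr_fun (hL.commutes E hE M hM) x
      simp only [ContinuousLinearMap.mul_apply] at hc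
      rw [m2 x hxM] at hc
      have hpM : projOf E x ∈ M := hc ▸ m1 _
      have hp0 : projOf E x = 0 := by
        by_contra hne
        apply hME
        rw [eq_span_of_PD h1 hpM hne]
        simpa using e1 x
      have := e3 x hp0
      intro e he
      rw [Submodule.mem_orthogonal_singleton_iff_inner_right]
      exact Submodule.inner_left_of_mem_orthogonal he this
    rw [Submodule.mem_orthogonal]
    intro e he
    exact Submodule.mem_orthogonal_singleton_iff_inner_left.mp (this he)
  have hs2 := eq_span_of_PD h2 hxF hx0
  have hmin : minus L M ∈ L := hL.join_mem _ (fun E hE => hE.1)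
  refine ⟨?_, ?_⟩
  · rw [hs]
    exact Module.rank_eq_one_iff_finrank_eq_one.mpr (finrank_span_singleton hx0)
  · rw [hs, ← hs2]
    haveI : CompleteSpace (minus L M) := (hL.isClosed _ hmin).completeSpace_coe
    rwa [Submodule.orthogonal_orthogonal]

lemma minus_orth_ne_bot (L : Set (Submodule ℂ H)) (M : Submodule ℂ H) (h : minus L M ≠ ⊤) :
    (minus L M)ᗮ ≠ ⊥ := by
  intro h'
  apply h
  unfold minus closedJoin at h' ⊢
  rw [Submodule.orthogonal_closure] at h'
  exact Submodule.topologicalClosure_eq_top_iff.mpr h'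

end helpers

theorem stmt_8 {H : Type*} [NormedAddCommGroup H] [InnerProductSpace ℂ H]
    [CompleteSpace H] [TopologicalSpace.SeparableSpace H]
    (L : Set (Submodule ℂ H)) (hL : IsCSL L)
    (Φ : (H →L[ℂ] H) → (H →L[ℂ] H)) (hlin : IsLinearOnAlg L Φ)
    (hrank : RankPreserving L Φ)
    (M N : Submodule ℂ H) (hM : M ∈ L) (hN : N ∈ L)
    (hM0 : M ≠ ⊥) (hN0 : N ≠ ⊥)
    (hMiso : ¬ Isolated L M) (hNiso : ¬ Isolated L N)
    (hMm : minus L M ≠ ⊤) (hNm : minus L N ≠ ⊤)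
    (hMc : Consistent L Φ M) (hNt : Twisted L Φ N) :
    M ⊓ N = ⊥ ∧ (minus L M)ᗮ ⊓ (minus L N)ᗮ = ⊥ := by
  obtain ⟨-, -, U, V, hUV⟩ := hMc
  obtain ⟨-, -, U', V', hUV'⟩ := hNt
  have hF := minus_orth_ne_bot L M hMm
  have hG := minus_orth_ne_bot L N hNm
  have nz : ∀ (E : Submodule ℂ H) (x : H) (f : H), x ∈ E → f ∈ (minus L E)ᗮ → x ≠ 0 → f ≠ 0 →
      Φ (rankOne x f) ≠ 0 := by
    intro E x f hx hf hx0 hf0 h0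
    have h1 := hrank _ (rankOne_mem_algL L E hx hf)
      ((opRank_rankOne_le x f).trans_lt Cardinal.one_lt_aleph0)
    rw [h0] at h1
    have h2 : opRank (0 : H →L[ℂ] H) = 0 := by simp [opRank]
    rw [h2] at h1
    have h3 := DFunLike.congr_fun (opRank_eq_zero _ h1.symm) f
    rw [rankOne_apply'] at h3
    simp [hx0, hf0] at h3
  have hMF : ∀ (x : M) (f : ((minus L M)ᗮ : Submodule ℂ H)), x ≠ 0 → f ≠ 0 →
      U x ≠ 0 ∧ V f ≠ 0 := by
    intro x f hx hf
    have := nz M x f x.2 f.2 (by simpa using hx) (by simpa using hf)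
    rw [hUV] at this
    constructor <;> intro h0 <;> apply this <;> ext k <;> simp [rankOne_apply', h0]
  have hNG : ∀ (x : N) (f : ((minus L N)ᗮ : Submodule ℂ H)), x ≠ 0 → f ≠ 0 →
      U' f ≠ 0 ∧ V' x ≠ 0 := by
    intro x f hx hf
    have := nz N x f x.2 f.2 (by simpa using hx) (by simpa using hf)
    rw [hUV'] at this
    constructor <;> intro h0 <;> apply this <;> ext k <;> simp [rankOne_apply', h0]
  obtain ⟨x0, hx0⟩ := exists_ne_zero' hM0
  obtain ⟨y0, hy0⟩ := exists_ne_zero' hN0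
  obtain ⟨f0, hf0⟩ := exists_ne_zero' hF
  obtain ⟨g0, hg0⟩ := exists_ne_zero' hG
  have nU : ∀ x, x ≠ 0 → U x ≠ 0 := fun x hx => (hMF x f0 hx hf0).1
  have nV : ∀ x, x ≠ 0 → V x ≠ 0 := fun f hf => (hMF x0 f hx0 hf).2
  have nU' : ∀ x, x ≠ 0 → U' x ≠ 0 := fun f hf => (hNG y0 f hy0 hf).1
  have nV' : ∀ x, x ≠ 0 → V' x ≠ 0 := fun x hx => (hNG x g0 hx hg0).2
  have hP : Pairing M (minus L M)ᗮ N (minus L N)ᗮ U V U' V' :=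
    { neM := hM0
      neF := hF
      neN := hN0
      neG := hG
      hU := PD.of_map (σ' := RingHom.id ℂ) (fun _ => rfl) U nU
      hV := PD.of_map (σ' := RingHom.id ℂ) (fun _ => rfl) V nV
      hU' := PD.of_map (σ' := starRingEnd ℂ) (fun c => Complex.conj_conj c) U' nU'
      hV' := PD.of_map (σ' := starRingEnd ℂ) (fun c => Complex.conj_conj c) V' nV'
      nU := nU
      nV := nV
      nU' := nU'
      nV' := nV'
      cross := by
        intro x f y g
        have a1 := rankOne_mem_algL L M x.2 f.2
        have a2 := rankOne_mem_algL L N y.2 g.2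
        rw [← opRank_sum_le_one_iff, ← opRank_sum_le_one_iff, ← hUV, ← hUV',
          ← hlin.map_add _ a1 _ a2, hrank _ (add_mem_algL L a1 a2) (opRank_sum_lt _ _ _ _)]
      isoM := fun h1 h2 => hMiso (isolated_of L hL M hM hM0 h1 h2)
      isoN := fun h1 h2 => hNiso (isolated_of L hL N hN hN0 h1 h2) }
  constructor
  · rw [Submodule.eq_bot_iff]
    rintro x ⟨h1, h2⟩
    by_contra hx
    exact hP.part1 x hx h1 h2
  · rw [Submodule.eq_bot_iff]
    rintro x ⟨h1, h2⟩
    by_contra hx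
    exact hP.part2 x hx h1 h2
end
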